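/- arXiv:1602.00848 — 7 statements merged into one kernel-verified Lean document; each statement's English description precedes it below -/
import Mathlib

section
/- Let K be a field with a discrete valuation val, valuation ring O_K, and uniformizer π. Suppose a matrix M ∈ M_{n×m}(K) admits two factorizations M = P·Δ·Q = P'·Δ'·Q' where P, P' ∈ M_n(O_K) and Q, Q' ∈ M_m(O_K) are invertible over O_K, and Δ, Δ' are diagonal matrices whose diagonal entries are π^{a_1}, …, π^{a_s}, 0, …, 0 and π^{b_1}, …, π^{b_t}, 0, …, 0 respectively, with a_1 ≤ … ≤ a_s and b_1 ≤ … ≤ b_t integers. Then Δ = Δ' (in particular s = t and a_i = b_i for all i). -/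
/-!
The `k`-th diagonal valuation of `Δ` can only increase under `Δ ↦ U Δ V` with `U`, `V` integral
(`snfDiag_exponent_le`); since `P`, `Q`, `P'`, `Q'` have integral inverses (Cramer's rule), this
applies in both directions and forces the diagonals to agree.

For the monotonicity, let `Δ' = U Δ V`. Among the vectors supported on the first `k + 1`
coordinates there is a nonzero `x` such that `V x` vanishes in its first `k` coordinates, because
`k < k + 1`. Let `v` be the least valuation of an entry of `x`, attained at `j ≤ k`. Every entry of
`Δ (V x)`, hence of `U Δ V x`, has valuation at least `a k + v`, whereas the `j`-th entry of `Δ' x`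
has valuation `b j + v ≤ b k + v`. Hence `a k ≤ b k`.
-/

/-- The diagonal matrix of a Smith normal form: diagonal entries
`π ^ a 0, …, π ^ a (s-1), 0, …, 0`. -/
def snfDiag {K : Type} [Field K] (π : K) (n m s : ℕ) (a : ℕ → ℤ) :
    Matrix (Fin n) (Fin m) K :=
  fun i j => if (i : ℕ) = (j : ℕ) ∧ (i : ℕ) < s then π ^ a (i : ℕ) else 0

section
variable {K : Type} [Field K] (val : AddValuation K (WithTop ℤ))

lemma val_mulVec_ge {ι κ : Type*} [Fintype κ] (A : Matrix ι κ K)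
    (hA : ∀ i j, 0 ≤ val (A i j)) (x : κ → K) (v : WithTop ℤ) (hx : ∀ j, v ≤ val (x j)) (i : ι) :
    v ≤ val (A.mulVec x i) := by
  refine val.map_le_sum fun j _ => ?_
  rw [val.map_mul]
  simpa using add_le_add (hA i j) (hx j)

lemma val_mul_nonneg {ι κ μ : Type*} [Fintype κ] (A : Matrix ι κ K) (B : Matrix κ μ K)
    (hA : ∀ i j, 0 ≤ val (A i j)) (hB : ∀ i j, 0 ≤ val (B i j)) (i : ι) (j : μ) :
    0 ≤ val ((A * B) i j) :=
  val_mulVec_ge val A hA (fun k => B k j) 0 (fun k => hB k j) i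

lemma val_det_nonneg {n : ℕ} (A : Matrix (Fin n) (Fin n) K) (hA : ∀ i j, 0 ≤ val (A i j)) :
    0 ≤ val A.det := by
  rw [Matrix.det_apply]
  refine val.map_le_sum fun σ _ => ?_
  have h : 0 ≤ val (∏ i, A (σ i) i) := by
    refine Finset.prod_induction _ (fun x => 0 ≤ val x) (fun x y hx hy => ?_) ?_ fun i _ => hA _ _
    · rw [val.map_mul]; exact add_nonneg hx hy
    · rw [val.map_one]
  rcases Int.units_eq_one_or (Equiv.Perm.sign σ) with e | e <;> simpa [e, val.map_neg] using h

lemma isUnit_det_of_val {n : ℕ} {A : Matrix (Fin n) (Fin n) K} (hdet : val A.det = 0) :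
    IsUnit A.det := by
  refine isUnit_iff_ne_zero.mpr fun h => ?_
  rw [h, val.map_zero] at hdet
  exact WithTop.top_ne_zero hdet

/-- A matrix over `O_K` whose determinant is a unit of `O_K` has its inverse over `O_K`. -/
lemma val_inv_nonneg {n : ℕ} (A : Matrix (Fin n) (Fin n) K) (hA : ∀ i j, 0 ≤ val (A i j))
    (hdet : val A.det = 0) (i j : Fin n) : 0 ≤ val (A⁻¹ i j) := by
  have hadj : 0 ≤ val (A.adjugate i j) := by
    rw [Matrix.adjugate_apply]
    refine val_det_nonneg val _ fun k l => ?_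
    rw [Matrix.updateRow_apply]
    split_ifs
    · by_cases h : l = i
      · subst h; simp
      · simp [Pi.single_eq_of_ne h]
    · exact hA k l
  have hu := isUnit_det_of_val val hdet
  have h : A.det * A⁻¹ i j = A.adjugate i j := by
    rw [Matrix.inv_def, Matrix.smul_apply, smul_eq_mul, ← mul_assoc, Ring.mul_inverse_cancel _ hu,
      one_mul]
  rw [← h, val.map_mul, hdet, zero_add] at hadj
  exact hadj

lemma val_zpow_mono {π : K} (hπ : val π = 1) {z w : ℤ} (h : z ≤ w) :
    val (π ^ z) ≤ val (π ^ w) := by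
  have h0 : π ≠ 0 := by
    rintro rfl
    simp at hπ
  obtain ⟨d, rfl⟩ := Int.le.dest h
  rw [zpow_add₀ h0, val.map_mul, zpow_natCast, val.map_pow, hπ]
  exact le_add_of_nonneg_right (nsmul_nonneg zero_le_one d)

lemma snfDiag_mulVec {π : K} {n m s : ℕ} {a : ℕ → ℤ} (y : Fin m → K) (i : Fin n) :
    (snfDiag π n m s a).mulVec y i =
      if h : (i : ℕ) < m ∧ (i : ℕ) < s then π ^ a i * y ⟨i, h.1⟩ else 0 := by
  simp only [Matrix.mulVec, dotProduct, snfDiag]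
  split_ifs with h
  · rw [Finset.sum_eq_single ⟨i, h.1⟩]
    · simp [h.2]
    · intro j _ hj
      rw [if_neg, zero_mul]
      exact fun e => hj (Fin.ext e.1.symm)
    · simp
  · refine Finset.sum_eq_zero fun j _ => ?_
    rw [if_neg, zero_mul]
    exact fun e => h ⟨e.1 ▸ j.2, e.2⟩

/-- A nonzero vector supported on the first `k + 1` coordinates whose image under `V` vanishes in
the first `k` coordinates. -/
lemma exists_vec {m k : ℕ} (hk : k < m) (V : Matrix (Fin m) (Fin m) K) :
    ∃ x : Fin m → K, x ≠ 0 ∧ (∀ j : Fin m, k < j → x j = 0) ∧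
      ∀ l : Fin m, (l : ℕ) < k → V.mulVec x l = 0 := by
  let e : Fin (k + 1) → Fin m := Fin.castLE hk
  let c : Fin k → Fin m := Fin.castLE hk.le
  obtain ⟨x, hx, hx0⟩ := (Submodule.ne_bot_iff _).mp
    (LinearMap.ker_ne_bot_of_finrank_lt (f := (V.submatrix c e).mulVecLin) (by simp))
  have he : Function.Injective e := Fin.castLE_injective _
  refine ⟨Function.extend e x 0, fun h => hx0 ?_, fun j hj => ?_, fun l hl => ?_⟩
  · ext i
    simpa [he.extend_apply] using congrFun h (e i)
  · rw [Function.extend_apply', Pi.zero_apply]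
    rintro ⟨i, rfl⟩
    have := i.2
    simp [e] at hj
    omega
  · have h := congrFun (LinearMap.mem_ker.mp hx) ⟨l, hl⟩
    simp only [Matrix.mulVecLin_apply, Matrix.mulVec, dotProduct, Matrix.submatrix_apply,
      Pi.zero_apply] at h ⊢
    rw [← h]
    symm
    refine Finset.sum_of_injOn e he.injOn (by simp) (fun j _ hj => ?_) fun i _ => ?_
    · rw [Function.extend_apply', Pi.zero_apply, mul_zero]
      rintro ⟨i, rfl⟩
      exact hj ⟨i, by simp, rfl⟩
    · rw [he.extend_apply]
      rfl

/-- Multiplying by integral matrices on both sides can only increase the `k`-th diagonal valuation,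
with a zero diagonal entry having valuation `⊤`. -/
lemma snfDiag_exponent_le {π : K} (hπ : val π = 1) {n m s t : ℕ} {a b : ℕ → ℤ}
    (ha : ∀ i j : ℕ, i ≤ j → j < s → a i ≤ a j)
    (hb : ∀ i j : ℕ, i ≤ j → j < t → b i ≤ b j)
    {U : Matrix (Fin n) (Fin n) K} {V : Matrix (Fin m) (Fin m) K}
    (hU : ∀ i j, 0 ≤ val (U i j)) (hV : ∀ i j, 0 ≤ val (V i j))
    (h : snfDiag π n m t b = U * snfDiag π n m s a * V)
    {k : ℕ} (hkn : k < n) (hkm : k < m) (hkt : k < t) : k < s ∧ a k ≤ b k := by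
  by_contra hcon
  have h0 : π ≠ 0 := by
    rintro rfl
    simp at hπ
  obtain ⟨x, hx0, hxs, hxV⟩ := exists_vec hkm V
  obtain ⟨j, -, hj⟩ := Finset.exists_min_image Finset.univ (fun j => val (x j)) ⟨⟨k, hkm⟩, by simp⟩
  have hxj : x j ≠ 0 := by
    intro e
    apply hx0
    ext i
    have := hj i (by simp)
    rw [e, val.map_zero, top_le_iff, val.top_iff] at this
    exact this
  have hjk : (j : ℕ) ≤ k := by
    by_contra hlt
    exact hxj (hxs j (by omega))
  have hy := val_mulVec_ge val V hV x (val (x j)) fun i => hj i (by simp)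
  have hD : ∀ i, val (π ^ (b k + 1)) + val (x j) ≤
      val ((snfDiag π n m s a).mulVec (V.mulVec x) i) := by
    intro i
    rw [snfDiag_mulVec]
    split_ifs with hi
    · by_cases hik : (i : ℕ) < k
      · rw [hxV _ hik]
        simp
      · rw [val.map_mul]
        refine add_le_add (val_zpow_mono val hπ ?_) (hy _)
        have h1 := ha k i (by omega) hi.2
        have h2 : ¬ a k ≤ b k := fun h2 => hcon ⟨by omega, h2⟩
        omega
    · simp
  have hlow := val_mulVec_ge val U hU _ _ hD ⟨j, by omega⟩
  rw [Matrix.mulVec_mulVec, Matrix.mulVec_mulVec, ← h, snfDiag_mulVec,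
    dif_pos ⟨j.2, by simp; omega⟩, val.map_mul] at hlow
  have hup := hlow.trans (add_le_add_left (val_zpow_mono val hπ (hb j k hjk hkt)) _)
  rw [zpow_add_one₀ h0, val.map_mul, hπ] at hup
  have f1 : val (π ^ b k) ≠ ⊤ := fun e => zpow_ne_zero _ h0 (val.top_iff.mp e)
  have f2 : val (x j) ≠ ⊤ := fun e => hxj (val.top_iff.mp e)
  obtain ⟨p, hp⟩ := WithTop.ne_top_iff_exists.mp f1
  obtain ⟨q, hq⟩ := WithTop.ne_top_iff_exists.mp f2
  simp only [← hp, ← hq] at hup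
  have : p + 1 + q ≤ p + q := by exact_mod_cast hup
  omega

/-- The left and right factors of two integral factorizations can be moved to one side. -/
lemma exists_integral_transition {n m : ℕ} {P P' : Matrix (Fin n) (Fin n) K}
    {Q Q' : Matrix (Fin m) (Fin m) K} {D D' : Matrix (Fin n) (Fin m) K}
    (hP : ∀ i j, 0 ≤ val (P i j)) (hQ : ∀ i j, 0 ≤ val (Q i j))
    (hP' : ∀ i j, 0 ≤ val (P' i j)) (hP'det : val P'.det = 0)
    (hQ' : ∀ i j, 0 ≤ val (Q' i j)) (hQ'det : val Q'.det = 0)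
    (h : P * D * Q = P' * D' * Q') :
    ∃ (U : Matrix (Fin n) (Fin n) K) (V : Matrix (Fin m) (Fin m) K),
      (∀ i j, 0 ≤ val (U i j)) ∧ (∀ i j, 0 ≤ val (V i j)) ∧ D' = U * D * V := by
  refine ⟨P'⁻¹ * P, Q * Q'⁻¹, val_mul_nonneg val _ _ (val_inv_nonneg val _ hP' hP'det) hP,
    val_mul_nonneg val _ _ hQ (val_inv_nonneg val _ hQ' hQ'det), ?_⟩
  calc D' = P'⁻¹ * (P' * D' * Q') * Q'⁻¹ := by
        rw [Matrix.mul_assoc P', Matrix.nonsing_inv_mul_cancel_left _ _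
          (isUnit_det_of_val val hP'det),
          Matrix.mul_nonsing_inv_cancel_right _ _ (isUnit_det_of_val val hQ'det)]
    _ = P'⁻¹ * P * D * (Q * Q'⁻¹) := by
        rw [← h]
        simp only [Matrix.mul_assoc]

end

/-- Uniqueness of the Smith normal form: if `M = P Δ Q = P' Δ' Q'` with
`P, Q, P', Q'` matrices over `O_K` invertible over `O_K` (entries of
nonnegative valuation and determinant of valuation `0`), and `Δ, Δ'` diagonal
with diagonal entries `π^{a_1}, …, π^{a_s}, 0, …, 0` resp.
`π^{b_1}, …, π^{b_t}, 0, …, 0` with `a_1 ≤ ⋯ ≤ a_s` and `b_1 ≤ ⋯ ≤ b_t`,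
then `Δ = Δ'`. -/
theorem snf_unique {K : Type} [Field K]
    (val : AddValuation K (WithTop ℤ)) (hval : Function.Surjective val)
    (π : K) (hπ : val π = 1)
    {n m : ℕ} (M : Matrix (Fin n) (Fin m) K)
    (P P' : Matrix (Fin n) (Fin n) K) (Q Q' : Matrix (Fin m) (Fin m) K)
    (s t : ℕ) (a b : ℕ → ℤ)
    (hP : ∀ i j, 0 ≤ val (P i j)) (hPdet : val P.det = 0)
    (hQ : ∀ i j, 0 ≤ val (Q i j)) (hQdet : val Q.det = 0)
    (hP' : ∀ i j, 0 ≤ val (P' i j)) (hP'det : val P'.det = 0)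
    (hQ' : ∀ i j, 0 ≤ val (Q' i j)) (hQ'det : val Q'.det = 0)
    (ha : ∀ i j : ℕ, i ≤ j → j < s → a i ≤ a j)
    (hb : ∀ i j : ℕ, i ≤ j → j < t → b i ≤ b j)
    (hM : M = P * snfDiag π n m s a * Q)
    (hM' : M = P' * snfDiag π n m t b * Q') :
    snfDiag π n m s a = snfDiag π n m t b := by
  obtain ⟨U, V, hU, hV, h⟩ := exists_integral_transition val hP hQ hP' hP'det hQ' hQ'det
    (hM.symm.trans hM')
  obtain ⟨U', V', hU', hV', h'⟩ := exists_integral_transition val hP' hQ' hP hPdet hQ hQdet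
    (hM'.symm.trans hM)
  ext i j
  simp only [snfDiag]
  by_cases hij : (i : ℕ) = j
  · have hjm : (i : ℕ) < m := hij ▸ j.2
    have h1 := fun ht => snfDiag_exponent_le val hπ ha hb hU hV h (k := i) i.2 hjm ht
    have h2 := fun hs => snfDiag_exponent_le val hπ hb ha hU' hV' h' (k := i) i.2 hjm hs
    by_cases hs : (i : ℕ) < s
    · obtain ⟨ht, hba⟩ := h2 hs
      simp only [hij, hij ▸ hs, hij ▸ ht, and_self, if_true]
      rw [← hij, le_antisymm (h1 ht).2 hba]
    · have ht : ¬ (i : ℕ) < t := fun ht => hs (h1 ht).1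
      simp [hs, ht]
  · simp [hij]
end

section
/- Let K be a field with a discrete valuation val, valuation ring O_K, and uniformizer π. Let δ > s ≥ 1, let a_1 ≤ … ≤ a_s be integers, and let N ∈ M_{δ×(s+1)}(K) be the matrix whose j-th column, for 1 ≤ j ≤ s, is π^{a_j}·e_j (where e_j is the j-th standard basis vector of K^δ) and whose last column is a vector w = (w_1, …, w_δ) ∈ K^δ. Assume w_k ≠ 0 for some k > s. Then the minimal valuation of an (s+1)×(s+1) minor of N equals a_1 + ⋯ + a_s + min_{k > s} val(w_k). -/
/-!
Up to sign, a maximal minor is a Leibniz sum of products `∏ j, N (ρ j) j` over injective choices of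
rows `ρ`. Such a product vanishes unless `ρ j = j` for every `j < s`; injectivity then forces the
last chosen row `ρ s` to be one of the rows `k ≥ s`, so that the product is
`π ^ (a_1 + ⋯ + a_s) * w_k` with `k ≥ s`. Hence every term, and by the ultrametric inequality every
maximal minor, has valuation at least the claimed minimum (`le_val_prod`, `le_val_det`).
Conversely, the rows `0, …, s - 1, k` with `k ≥ s` minimizing `val (w k)` give an upper triangular
submatrix whose determinant is exactly `π ^ (a_1 + ⋯ + a_s) * w_k` (`det_bordered`).
-/

theorem val_zpow {K : Type} [Field K] (val : AddValuation K (WithTop ℤ))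
    (π : K) (hπ : val π = 1) (n : ℤ) : val (π ^ n) = (n : WithTop ℤ) := by
  have hπ0 : π ≠ 0 := by
    rintro rfl
    rw [AddValuation.map_zero] at hπ
    exact absurd hπ (by decide)
  have hnat : ∀ m : ℕ, val (π ^ m) = ((m : ℤ) : WithTop ℤ) := by
    intro m
    rw [AddValuation.map_pow, hπ, nsmul_one]
    rfl
  obtain ⟨m, rfl | rfl⟩ := n.eq_nat_or_neg
  · rw [zpow_natCast]
    exact hnat m
  · have h : val (π ^ (-(m : ℤ))) + ((m : ℤ) : WithTop ℤ) = 0 := by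
      rw [← hnat m, ← AddValuation.map_mul, zpow_neg, zpow_natCast,
        inv_mul_cancel₀ (pow_ne_zero _ hπ0), AddValuation.map_one]
    generalize val (π ^ (-(m : ℤ))) = x at h
    cases x with
    | top => simp at h
    | coe x =>
      norm_cast at h ⊢
      omega

theorem prod_zpow_fin {K : Type} [Field K] (π : K) (hπ0 : π ≠ 0) (a : ℕ → ℤ) (s : ℕ) :
    ∏ j : Fin s, π ^ a (j : ℕ) = π ^ (∑ i ∈ Finset.range s, a i) := by
  rw [Fin.prod_univ_eq_prod_range (fun i => π ^ a i) s]
  induction s with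
  | zero => simp
  | succ s ih => rw [Finset.prod_range_succ, Finset.sum_range_succ, zpow_add₀ hπ0, ih]

/-- A single Leibniz term of a maximal minor: if it is nonzero, its first `s` factors are the
`π ^ a j`, and its last factor is some `w k` with `k ≥ s`. -/
theorem le_val_prod {K : Type} [Field K] (val : AddValuation K (WithTop ℤ))
    (π : K) (hπ : val π = 1) (hπ0 : π ≠ 0) {δ s : ℕ} (a : ℕ → ℤ) (w : Fin δ → K)
    (N : Matrix (Fin δ) (Fin (s + 1)) K)
    (hNcast : ∀ (i : Fin δ) (j : Fin s),
      N i (Fin.castSucc j) = if (i : ℕ) = (j : ℕ) then π ^ a (j : ℕ) else 0)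
    (hNlast : ∀ i : Fin δ, N i (Fin.last s) = w i)
    (ρ : Fin (s + 1) → Fin δ) (hρ : Function.Injective ρ) :
    ((∑ i ∈ Finset.range s, a i : ℤ) : WithTop ℤ) +
        (Finset.univ.filter fun k : Fin δ => s ≤ (k : ℕ)).inf (fun k => val (w k))
      ≤ val (∏ j, N (ρ j) j) := by
  by_cases h : ∀ j : Fin s, (ρ j.castSucc : ℕ) = j
  · have hk : s ≤ (ρ (Fin.last s) : ℕ) := by
      by_contra! hlt
      -- otherwise row `ρ s < s` is already used by the column of the same index
      have h1 : ρ (Fin.castSucc ⟨_, hlt⟩) = ρ (Fin.last s) := Fin.ext (h ⟨_, hlt⟩)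
      exact (Fin.castSucc_lt_last _).ne (hρ h1)
    have hprod : ∏ j, N (ρ j) j
        = π ^ (∑ i ∈ Finset.range s, a i) * w (ρ (Fin.last s)) := by
      rw [Fin.prod_univ_castSucc, hNlast, ← prod_zpow_fin π hπ0]
      congr 1
      exact Finset.prod_congr rfl fun j _ => by rw [hNcast, if_pos (h j)]
    rw [hprod, AddValuation.map_mul, val_zpow val π hπ]
    gcongr
    exact Finset.inf_le (f := fun k => val (w k)) (by simpa using hk)
  · push Not at h
    obtain ⟨j, hj⟩ := h
    rw [Finset.prod_eq_zero (Finset.mem_univ j.castSucc) (by rw [hNcast, if_neg hj]),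
      AddValuation.map_zero]
    exact le_top

theorem le_val_det {K : Type} [Field K] (val : AddValuation K (WithTop ℤ))
    {δ n : ℕ} (N : Matrix (Fin δ) (Fin n) K) (B : WithTop ℤ)
    (hB : ∀ ρ : Fin n → Fin δ, Function.Injective ρ → B ≤ val (∏ j, N (ρ j) j))
    (r : Fin n → Fin δ) (c : Fin n → Fin n)
    (hr : Function.Injective r) (hc : Function.Injective c) :
    B ≤ val (N.submatrix r c).det := by
  rw [Matrix.det_apply]
  refine AddValuation.map_le_sum val fun σ _ => ?_
  let e : Fin n ≃ Fin n := Equiv.ofBijective c (Finite.injective_iff_bijective.mp hc)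
  -- reindexing by the column permutation makes the columns appear in their original order
  have hprod : ∏ i, N.submatrix r c (σ i) i = ∏ j, N (r (σ (e.symm j))) j := by
    rw [← Equiv.prod_comp e (fun j => N (r (σ (e.symm j))) j)]
    refine Finset.prod_congr rfl fun i _ => ?_
    simp only [Equiv.symm_apply_apply, Matrix.submatrix_apply]
    rfl
  have key := hB (fun j => r (σ (e.symm j))) (hr.comp (σ.injective.comp e.symm.injective))
  rw [← hprod] at key
  rcases Int.units_eq_one_or (Equiv.Perm.sign σ) with h | h
  · simpa [h] using key
  · simpa [h, AddValuation.map_neg] using key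

/-- The minor on the rows `0, …, s - 1, k` with `k ≥ s`. -/
theorem det_bordered {K : Type} [Field K]
    (π : K) (hπ0 : π ≠ 0) {δ s : ℕ} (hsδ : s < δ) (a : ℕ → ℤ) (w : Fin δ → K)
    (N : Matrix (Fin δ) (Fin (s + 1)) K)
    (hNcast : ∀ (i : Fin δ) (j : Fin s),
      N i (Fin.castSucc j) = if (i : ℕ) = (j : ℕ) then π ^ a (j : ℕ) else 0)
    (hNlast : ∀ i : Fin δ, N i (Fin.last s) = w i)
    (k : Fin δ) (hk : s ≤ (k : ℕ)) :
    (N.submatrix (Fin.snoc (α := fun _ => Fin δ) (Fin.castLE hsδ.le) k) id).det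
      = π ^ (∑ i ∈ Finset.range s, a i) * w k := by
  rw [Matrix.det_of_isUpperTriangular, Fin.prod_univ_castSucc, ← prod_zpow_fin π hπ0]
  · simp [hNcast, hNlast]
  · intro i j hij
    simp only [id] at hij
    induction j using Fin.lastCases with
    | last => exact absurd hij (Fin.le_last i).not_gt
    | cast j =>
      induction i using Fin.lastCases with
      | last =>
        have : (k : ℕ) ≠ j := by omega
        simp [hNcast, this]
      | cast i =>
        have : (i : ℕ) ≠ j := (Fin.lt_def.mp hij).ne'
        simp [hNcast, this]


/-- The set of valuations of `k × k` minors of a matrix `N`. -/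
def minorVals {K : Type} [Field K] (val : AddValuation K (WithTop ℤ))
    {n m : ℕ} (N : Matrix (Fin n) (Fin m) K) (k : ℕ) : Set (WithTop ℤ) :=
  { v | ∃ (r : Fin k → Fin n) (c : Fin k → Fin m),
      Function.Injective r ∧ Function.Injective c ∧
      val (N.submatrix r c).det = v }

/-- Let `N ∈ M_{δ×(s+1)}(K)` be the matrix whose `j`-th column, for the first
`s` columns, is `π^{a_j} e_j`, and whose last column is a vector `w`.  Assume
some coordinate `w_k` with `k` beyond the first `s` rows is nonzero.  Then the
minimal valuation of an `(s+1) × (s+1)` minor of `N` is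
`a_1 + ⋯ + a_s + min_{k > s} val (w_k)`. -/
theorem minor_valuation_of_bordered_diagonal {K : Type} [Field K]
    (val : AddValuation K (WithTop ℤ)) (hval : Function.Surjective val)
    (π : K) (hπ : val π = 1)
    {δ s : ℕ} (hs : 1 ≤ s) (hsδ : s < δ)
    (a : ℕ → ℤ) (ha : ∀ i j : ℕ, i ≤ j → j < s → a i ≤ a j)
    (w : Fin δ → K)
    (N : Matrix (Fin δ) (Fin (s + 1)) K)
    (hNcast : ∀ (i : Fin δ) (j : Fin s),
      N i (Fin.castSucc j) = if (i : ℕ) = (j : ℕ) then π ^ a (j : ℕ) else 0)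
    (hNlast : ∀ i : Fin δ, N i (Fin.last s) = w i)
    (hw : ∃ k : Fin δ, s ≤ (k : ℕ) ∧ w k ≠ 0) :
    IsLeast (minorVals val N (s + 1))
      (((∑ i ∈ Finset.range s, a i : ℤ) : WithTop ℤ) +
        (Finset.univ.filter fun k : Fin δ => s ≤ (k : ℕ)).inf
          (fun k => val (w k))) := by
  have hπ0 : π ≠ 0 := by
    rintro rfl
    rw [AddValuation.map_zero] at hπ
    exact absurd hπ (by decide)
  constructor
  · obtain ⟨k₀, hk₀, -⟩ := hw
    obtain ⟨k, hk, hmin⟩ := Finset.exists_mem_eq_inf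
      (Finset.univ.filter fun k : Fin δ => s ≤ (k : ℕ)) ⟨k₀, by simpa using hk₀⟩
      (fun k => val (w k))
    have hk : s ≤ (k : ℕ) := by simpa using hk
    refine ⟨Fin.snoc (α := fun _ => Fin δ) (Fin.castLE hsδ.le) k, id, ?_,
      Function.injective_id, ?_⟩
    · refine Fin.snoc_injective_iff.mpr ⟨Fin.castLE_injective _, ?_⟩
      rintro ⟨i, rfl⟩
      exact absurd hk (by simp)
    · rw [det_bordered π hπ0 hsδ a w N hNcast hNlast k hk, AddValuation.map_mul,
        val_zpow val π hπ, hmin]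
  · rintro _ ⟨r, c, hr, hc, rfl⟩
    exact le_val_det val N _ (le_val_prod val π hπ hπ0 a w N hNcast hNlast) r c hr hc
end

section
/- Let K be a field with a discrete valuation val, valuation ring O_K, and uniformizer π. Let M ∈ M_n(O_K) be invertible over K with c = cond(M), and let E ∈ M_n(K) be a matrix all of whose entries have valuation at least l, where l > c. Then M + E is invertible over K and has the same invariant factors as M; in particular cond(M + E) = cond(M). -/
/-- The valuation ring of an additive valuation, as a subring of the field. -/
def valRing {K : Type} [Field K] (val : AddValuation K (WithTop ℤ)) : Subring K where
  carrier := {x | 0 ≤ val x}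
  mul_mem' {x y} hx hy := by
    simp only [Set.mem_ofPred_eq] at *
    rw [val.map_mul]; exact add_nonneg hx hy
  one_mem' := by simp
  add_mem' {x y} hx hy := val.map_le_add hx hy
  zero_mem' := by simp
  neg_mem' {x} hx := by simpa using hx

/-- The ideal of elements of positive valuation. -/
def valIdeal {K : Type} [Field K] (val : AddValuation K (WithTop ℤ)) : Ideal (valRing val) where
  carrier := {x | 0 < val (x : K)}
  add_mem' {x y} hx hy := by
    simp only [Set.mem_ofPred_eq, Subring.coe_add] at *
    exact val.map_lt_add hx hy
  zero_mem' := by simp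
  smul_mem' c x hx := by
    have hc : 0 ≤ val (c : K) := c.2
    simp only [Set.mem_ofPred_eq, smul_eq_mul, Subring.coe_mul, val.map_mul] at *
    exact hx.trans_le (le_add_of_nonneg_left hc)

theorem val_inv_of_val_zero {K : Type} [Field K] (val : AddValuation K (WithTop ℤ)) {x : K}
    (hx : val x = 0) : x ≠ 0 ∧ val x⁻¹ = 0 := by
  have h0 : x ≠ 0 := by rintro rfl; simp at hx
  refine ⟨h0, ?_⟩
  have h := val.map_mul x x⁻¹
  rw [mul_inv_cancel₀ h0, hx, zero_add, val.map_one] at h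
  exact h.symm

theorem val_uniformizer_zpow {K : Type} [Field K] (val : AddValuation K (WithTop ℤ)) {π : K}
    (hπ : val π = 1) (z : ℤ) : val (π ^ z) = (z : WithTop ℤ) := by
  have h0 : π ≠ 0 := by rintro rfl; simp at hπ
  have hnat : ∀ k : ℕ, val (π ^ k) = ((k : ℤ) : WithTop ℤ) := by
    intro k
    rw [val.map_pow, hπ]
    simp
  obtain ⟨k, rfl | rfl⟩ := z.eq_nat_or_neg
  · rw [zpow_natCast, hnat]
  · have h := val.map_mul (π ^ (-(k : ℤ))) (π ^ k)
    rw [← zpow_natCast π k, ← zpow_add₀ h0, neg_add_cancel, zpow_zero, val.map_one,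
      zpow_natCast, hnat] at h
    generalize val (π ^ (-(k : ℤ))) = w at *
    cases w with
    | top => simp at h
    | coe w =>
      have h' : (0 : ℤ) = w + k := by exact_mod_cast h
      have : w = -(k : ℤ) := by omega
      rw [this]

theorem val_mul_entry {K : Type} [Field K] (val : AddValuation K (WithTop ℤ)) {n : ℕ}
    (A B : Matrix (Fin n) (Fin n) K) {s t : WithTop ℤ}
    (hA : ∀ i j, s ≤ val (A i j)) (hB : ∀ i j, t ≤ val (B i j)) (i j : Fin n) :
    s + t ≤ val ((A * B) i j) := by
  rw [Matrix.mul_apply]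
  refine val.map_le_sum fun k _ => ?_
  rw [val.map_mul]
  exact add_le_add (hA i k) (hB k j)

theorem exists_valRing_lift {K : Type} [Field K] (val : AddValuation K (WithTop ℤ)) {n : ℕ}
    (A : Matrix (Fin n) (Fin n) K) (hA : ∀ i j, 0 ≤ val (A i j)) :
    ∃ A₀ : Matrix (Fin n) (Fin n) (valRing val), (valRing val).subtype.mapMatrix A₀ = A :=
  ⟨fun i j => ⟨A i j, hA i j⟩, rfl⟩

/-- Cramer: a matrix over the valuation ring with unit determinant has its inverse over that ring. -/
theorem val_inv_entry {K : Type} [Field K] (val : AddValuation K (WithTop ℤ)) {n : ℕ}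
    (A : Matrix (Fin n) (Fin n) K) (hA : ∀ i j, 0 ≤ val (A i j)) (hdet : val A.det = 0)
    (i j : Fin n) : 0 ≤ val (A⁻¹ i j) := by
  obtain ⟨A₀, rfl⟩ := exists_valRing_lift val A hA
  rw [Matrix.inv_def, Ring.inverse_eq_inv', Matrix.smul_apply, smul_eq_mul, val.map_mul,
    (val_inv_of_val_zero val hdet).2, zero_add, ← RingHom.map_adjugate]
  exact (A₀.adjugate i j).2

/-- A matrix congruent to the identity modulo the maximal ideal has unit determinant: its
determinant reduces to `1` in the quotient. -/
theorem val_det_one_add {K : Type} [Field K] (val : AddValuation K (WithTop ℤ)) {n : ℕ}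
    (G : Matrix (Fin n) (Fin n) K) (hG : ∀ i j, 0 < val (G i j)) : val (1 + G).det = 0 := by
  let G₀ : Matrix (Fin n) (Fin n) (valRing val) := fun i j => ⟨G i j, (hG i j).le⟩
  have hred : (Ideal.Quotient.mk (valIdeal val)).mapMatrix G₀ = 0 := by
    ext i j
    exact Ideal.Quotient.eq_zero_iff_mem.2 (hG i j)
  have hdet : Ideal.Quotient.mk (valIdeal val) (1 + G₀).det = Ideal.Quotient.mk _ 1 := by
    rw [RingHom.map_det, map_add, hred, map_one, add_zero, Matrix.det_one, map_one]
  have hmem : 0 < val (((1 + G₀).det - 1 : valRing val) : K) := Ideal.Quotient.eq.1 hdet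
  have hlift : (((1 + G₀).det : valRing val) : K) = (1 + G).det := by
    have h := RingHom.map_det (valRing val).subtype (1 + G₀)
    rw [map_add, map_one] at h
    exact h
  rw [AddSubgroupClass.coe_sub, hlift, Subring.coe_one] at hmem
  have h := val.map_add_eq_of_lt_left (x := 1) (y := (1 + G).det - 1) (by simpa using hmem)
  simpa using h

/-- Let `M ∈ M_n(O_K)` be invertible over `K` with invariant factors
`a_1 ≤ ⋯ ≤ a_n` and `c = a_n = cond M`, and let `E ∈ M_n(K)` have all entries
of valuation at least `l > c`.  Then `M + E` is invertible over `K` and has the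
same invariant factors as `M` (in particular `cond (M + E) = cond M`). -/
theorem perturbation_same_invariant_factors {K : Type} [Field K]
    (val : AddValuation K (WithTop ℤ)) (hval : Function.Surjective val)
    (π : K) (hπ : val π = 1)
    {n : ℕ} (hn : 0 < n)
    (M P Q : Matrix (Fin n) (Fin n) K)
    (hMint : ∀ i j, 0 ≤ val (M i j))
    (hMinv : M.det ≠ 0)
    (hP : ∀ i j, 0 ≤ val (P i j)) (hPdet : val P.det = 0)
    (hQ : ∀ i j, 0 ≤ val (Q i j)) (hQdet : val Q.det = 0)
    (a : ℕ → ℤ) (ha : ∀ i j : ℕ, i ≤ j → j < n → a i ≤ a j)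
    (hM : M = P * snfDiag π n n n a * Q)
    (l : ℤ) (hl : a (n - 1) < l)
    (E : Matrix (Fin n) (Fin n) K)
    (hE : ∀ i j, ((l : ℤ) : WithTop ℤ) ≤ val (E i j)) :
    (M + E).det ≠ 0 ∧
      ∃ P' Q' : Matrix (Fin n) (Fin n) K,
        (∀ i j, 0 ≤ val (P' i j)) ∧ val P'.det = 0 ∧
        (∀ i j, 0 ≤ val (Q' i j)) ∧ val Q'.det = 0 ∧
        M + E = P' * snfDiag π n n n a * Q' := by
  have hdM : P.det * (snfDiag π n n n a).det * Q.det ≠ 0 := by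
    rw [← Matrix.det_mul, ← Matrix.det_mul, ← hM]; exact hMinv
  have h0 : π ≠ 0 := by rintro rfl; simp at hπ
  have hPu : IsUnit P.det := (val_inv_of_val_zero val hPdet).1.isUnit
  have hQu : IsUnit Q.det := (val_inv_of_val_zero val hQdet).1.isUnit
  have hΔ : snfDiag π n n n a = Matrix.diagonal fun j : Fin n => π ^ a j := by
    ext i j
    simp [snfDiag, Matrix.diagonal_apply, Fin.ext_iff]
  set F := P⁻¹ * E * Q⁻¹ with hF
  have hFval : ∀ i j, (l : WithTop ℤ) ≤ val (F i j) := by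
    intro i j
    have h := val_mul_entry val (P⁻¹ * E) Q⁻¹
      (val_mul_entry val P⁻¹ E (val_inv_entry val P hP hPdet) hE)
      (val_inv_entry val Q hQ hQdet) i j
    simpa using h
  set G := F * Matrix.diagonal fun j : Fin n => π ^ (-a j) with hGdef
  have hGΔ : G * snfDiag π n n n a = F := by
    rw [hGdef, hΔ, Matrix.mul_assoc, Matrix.diagonal_mul_diagonal]
    have hcancel : ∀ j : Fin n, π ^ (-a j) * π ^ a j = 1 := fun j => by
      rw [← zpow_add₀ h0, neg_add_cancel, zpow_zero]
    simp only [hcancel, Matrix.diagonal_one, Matrix.mul_one]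
  have hG : ∀ i j, 0 < val (G i j) := by
    intro i j
    rw [hGdef, Matrix.mul_diagonal, val.map_mul, val_uniformizer_zpow val hπ]
    have haj : a j < l := (ha j (n - 1) (by omega) (by omega)).trans_lt hl
    calc (0 : WithTop ℤ) < ((l + -a j : ℤ) : WithTop ℤ) := by
          exact_mod_cast (by omega : 0 < l + -a j)
      _ = (l : WithTop ℤ) + ((-a j : ℤ) : WithTop ℤ) := WithTop.coe_add _ _
      _ ≤ _ := by gcongr; exact hFval i j
  have hGdet := val_det_one_add val G hG
  have hE' : E = P * F * Q := by
    rw [hF, Matrix.mul_assoc P⁻¹, Matrix.mul_nonsing_inv_cancel_left _ _ hPu,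
      Matrix.nonsing_inv_mul_cancel_right _ _ hQu]
  have hfac : M + E = P * (1 + G) * snfDiag π n n n a * Q := by
    rw [Matrix.mul_assoc P, Matrix.add_mul, hGΔ, Matrix.one_mul, Matrix.mul_add, Matrix.add_mul,
      ← hM, ← hE']
  refine ⟨?_, P * (1 + G), Q, ?_, ?_, hQ, hQdet, hfac⟩
  · rw [hfac, Matrix.det_mul, Matrix.det_mul, Matrix.det_mul]
    have := (val_inv_of_val_zero val hGdet).1
    simp only [mul_ne_zero_iff] at hdM ⊢
    tauto
  · have h1 : ∀ i j, (0 : WithTop ℤ) ≤ val ((1 + G) i j) := by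
      intro i j
      refine val.map_le_add ?_ (hG i j).le
      rw [Matrix.one_apply]
      split_ifs <;> simp
    intro i j
    simpa using val_mul_entry val P (1 + G) hP h1 i j
  · rw [Matrix.det_mul, val.map_mul, hPdet, hGdet, add_zero]
end

section
/- Let K be a field with a discrete valuation val, valuation ring O_K, and uniformizer π. Let M ∈ M_{n×m}(O_K) be a matrix with entries in O_K of full rank min(n,m), with c = cond(M), and let E ∈ M_{n×m}(K) be a matrix all of whose entries have valuation at least l, where l > c. Then M + E has full rank min(n,m) and has the same invariant factors as M. -/
namespace SNFPerturb

variable {K : Type} [Field K] (val : AddValuation K (WithTop ℤ))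

/-- The valuation ring of `val`, as a subring of `K`. -/
def integers : Subring K where
  carrier := {x | 0 ≤ val x}
  mul_mem' {x y} hx hy := by
    simp only [Set.mem_ofPred_eq, AddValuation.map_mul] at *
    exact add_nonneg hx hy
  one_mem' := by simp
  add_mem' {x y} hx hy := val.map_le_add hx hy
  zero_mem' := by simp
  neg_mem' {x} hx := by simpa using hx

/-- The ideal of elements of valuation at least `1` in the valuation ring. -/
def maxIdeal : Ideal (integers val) where
  carrier := {x | 1 ≤ val x}
  add_mem' {x y} hx hy := val.map_le_add hx hy
  zero_mem' := by simp
  smul_mem' c x hx := by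
    have hc : 0 ≤ val (c : K) := c.2
    have hx' : 1 ≤ val (x : K) := hx
    simpa using add_le_add hc hx'

lemma le_val_sum {ι : Type*} (s : Finset ι) (f : ι → K) (g : WithTop ℤ)
    (h : ∀ i, g ≤ val (f i)) : g ≤ val (∑ i ∈ s, f i) :=
  val.map_le_sum fun i _ => h i

lemma le_val_mul {p q r : ℕ} {A : Matrix (Fin p) (Fin q) K} {B : Matrix (Fin q) (Fin r) K}
    {g h : WithTop ℤ} (hA : ∀ i j, g ≤ val (A i j)) (hB : ∀ i j, h ≤ val (B i j)) (i j) :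
    g + h ≤ val ((A * B) i j) := by
  rw [Matrix.mul_apply]
  refine le_val_sum val _ _ _ fun k => ?_
  rw [AddValuation.map_mul]
  exact add_le_add (hA _ _) (hB _ _)

lemma val_mul_nonneg {p q r : ℕ} {A : Matrix (Fin p) (Fin q) K} {B : Matrix (Fin q) (Fin r) K}
    (hA : ∀ i j, 0 ≤ val (A i j)) (hB : ∀ i j, 0 ≤ val (B i j)) (i j) :
    0 ≤ val ((A * B) i j) := by
  simpa using le_val_mul val hA hB i j

lemma det_ne_zero {p : ℕ} {A : Matrix (Fin p) (Fin p) K} (hdet : val A.det = 0) : A.det ≠ 0 := by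
  intro h
  simp [h] at hdet

/-- The adjugate of an integral matrix is integral, hence so is its inverse if the determinant is a
unit. -/
lemma val_inv_nonneg {p : ℕ} {A : Matrix (Fin p) (Fin p) K} (hA : ∀ i j, 0 ≤ val (A i j))
    (hdet : val A.det = 0) (i j) : 0 ≤ val (A⁻¹ i j) := by
  let B : Matrix (Fin p) (Fin p) (integers val) := fun i j => ⟨A i j, hA i j⟩
  have hadj : A.adjugate = (integers val).subtype.mapMatrix B.adjugate :=
    (RingHom.map_adjugate (integers val).subtype B).symm
  have h0 : 0 ≤ val (A.adjugate i j) := by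
    rw [hadj]
    exact (B.adjugate i j).2
  have hinv : val (A.det⁻¹) = 0 := by
    have h := congrArg val (mul_inv_cancel₀ (det_ne_zero val hdet))
    rwa [AddValuation.map_mul, hdet, zero_add, AddValuation.map_one] at h
  rw [Matrix.inv_def, Ring.inverse_eq_inv', Matrix.smul_apply, smul_eq_mul,
    AddValuation.map_mul, hinv, zero_add]
  exact h0

lemma val_one_add_nonneg {p : ℕ} {F : Matrix (Fin p) (Fin p) K} (hF : ∀ i j, 1 ≤ val (F i j))
    (i j) : 0 ≤ val ((1 + F) i j) := by
  rw [Matrix.add_apply]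
  refine val.map_le_add ?_ (zero_le_one.trans (hF i j))
  rw [Matrix.one_apply]
  split_ifs <;> simp

/-- A matrix congruent to the identity modulo the maximal ideal has determinant congruent to `1`,
so its determinant is a unit. -/
lemma val_det_one_add {p : ℕ} {F : Matrix (Fin p) (Fin p) K} (hF : ∀ i j, 1 ≤ val (F i j)) :
    val (1 + F).det = 0 := by
  let G : Matrix (Fin p) (Fin p) (integers val) :=
    fun i j => ⟨F i j, zero_le_one.trans (hF i j)⟩
  let q := Ideal.Quotient.mk (maxIdeal val)
  have hG : q.mapMatrix G = 0 := by
    ext i j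
    exact Ideal.Quotient.eq_zero_iff_mem.2 (hF i j)
  have h1 : q (1 + G).det = q 1 := by
    rw [RingHom.map_det, map_add, hG, map_one, add_zero, Matrix.det_one, map_one]
  have h2 : 1 ≤ val (((1 + G).det - 1 : integers val) : K) := Ideal.Quotient.eq.1 h1
  have h3 : (((1 + G).det : integers val) : K) = (1 + F).det := by
    have h := RingHom.map_det (integers val).subtype (1 + G)
    rw [map_add, map_one] at h
    exact h
  have h4 : 1 ≤ val ((1 + F).det - 1) := by
    rw [← h3]
    exact h2
  have h5 : val (1 : K) < val ((1 + F).det - 1) := by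
    rw [AddValuation.map_one]
    exact zero_lt_one.trans_le h4
  have h6 := AddValuation.map_add_eq_of_lt_left val h5
  rwa [add_sub_cancel, AddValuation.map_one] at h6

lemma val_zpow {π : K} (hπ : val π = 1) (k : ℤ) : val (π ^ k) = (k : WithTop ℤ) := by
  have hπ0 : π ≠ 0 := by
    rintro rfl
    simp at hπ
  have hnat : ∀ j : ℕ, val (π ^ j) = ((j : ℤ) : WithTop ℤ) := fun j => by
    rw [AddValuation.map_pow, hπ]
    simp
  obtain ⟨j, rfl | rfl⟩ := k.eq_nat_or_neg
  · rw [zpow_natCast, hnat]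
  · have h := congrArg val (mul_inv_cancel₀ (pow_ne_zero j hπ0))
    rw [AddValuation.map_mul, hnat, AddValuation.map_one] at h
    rw [zpow_neg, zpow_natCast]
    generalize val (π ^ j)⁻¹ = v at h
    cases v with
    | top => simp at h
    | coe v =>
      norm_cast at h ⊢
      omega

/-- If `n ≤ m`, the transposed shape of `snfDiag` with the opposite exponents is a right
inverse of the full-rank `snfDiag`. -/
lemma snfDiag_mul_neg {π : K} (hπ0 : π ≠ 0) {n m : ℕ} (h : n ≤ m) (a : ℕ → ℤ) :
    snfDiag π n m n a * snfDiag π m n n (fun i => -a i) = 1 := by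
  ext i j
  rw [Matrix.mul_apply, Finset.sum_eq_single (Fin.castLE h i)]
  · by_cases hij : i = j
    · subst hij
      simpa [snfDiag] using mul_inv_cancel₀ (zpow_ne_zero _ hπ0)
    · have : (i : ℕ) ≠ j := fun h => hij (Fin.ext h)
      simp [snfDiag, hij, this]
  · intro k _ hk
    have : (i : ℕ) ≠ k := fun h => hk (Fin.ext h.symm)
    simp [snfDiag, this]
  · simp

lemma le_val_snfDiag_neg {π : K} (hπ : val π = 1) {n m s : ℕ} {a : ℕ → ℤ} {c : ℤ}
    (ha : ∀ i < s, a i ≤ c) (i : Fin n) (j : Fin m) :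
    ((-c : ℤ) : WithTop ℤ) ≤ val (snfDiag π n m s (fun i => -a i) i j) := by
  unfold snfDiag
  split_ifs with h
  · rw [val_zpow val hπ]
    have := ha i h.2
    exact WithTop.coe_le_coe.2 (neg_le_neg this)
  · simp

end SNFPerturb

open SNFPerturb


/-- Let `M ∈ M_{n×m}(O_K)` be of full rank `min n m`, with invariant factors
`a_1 ≤ ⋯ ≤ a_{min n m}` and `c = cond M` their largest, and let
`E ∈ M_{n×m}(K)` have all entries of valuation at least `l > c`.  Then `M + E`
has full rank `min n m` and the same invariant factors as `M`. -/
theorem perturbation_same_invariant_factors_rect {K : Type} [Field K]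
    (val : AddValuation K (WithTop ℤ)) (hval : Function.Surjective val)
    (π : K) (hπ : val π = 1)
    {n m : ℕ} (hnm : 0 < min n m)
    (M : Matrix (Fin n) (Fin m) K)
    (P : Matrix (Fin n) (Fin n) K) (Q : Matrix (Fin m) (Fin m) K)
    (hMint : ∀ i j, 0 ≤ val (M i j))
    (hP : ∀ i j, 0 ≤ val (P i j)) (hPdet : val P.det = 0)
    (hQ : ∀ i j, 0 ≤ val (Q i j)) (hQdet : val Q.det = 0)
    (a : ℕ → ℤ) (ha : ∀ i j : ℕ, i ≤ j → j < min n m → a i ≤ a j)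
    (hM : M = P * snfDiag π n m (min n m) a * Q)
    (l : ℤ) (hl : a (min n m - 1) < l)
    (E : Matrix (Fin n) (Fin m) K)
    (hE : ∀ i j, ((l : ℤ) : WithTop ℤ) ≤ val (E i j)) :
    ∃ (P' : Matrix (Fin n) (Fin n) K) (Q' : Matrix (Fin m) (Fin m) K),
      (∀ i j, 0 ≤ val (P' i j)) ∧ val P'.det = 0 ∧
      (∀ i j, 0 ≤ val (Q' i j)) ∧ val Q'.det = 0 ∧
      M + E = P' * snfDiag π n m (min n m) a * Q' := by
  have hπ0 : π ≠ 0 := by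
    rintro rfl
    simp at hπ
  have hPu : IsUnit P.det := (det_ne_zero val hPdet).isUnit
  have hQu : IsUnit Q.det := (det_ne_zero val hQdet).isUnit
  set c := a (min n m - 1) with hc
  have hac : ∀ i < min n m, a i ≤ c := fun i hi => ha _ _ (by omega) (by omega)
  set Δ := snfDiag π n m (min n m) a with hΔ
  set Δ' := snfDiag π m n (min n m) (fun i => -a i) with hΔ'
  set E' := P⁻¹ * E * Q⁻¹ with hE'
  have hE'val : ∀ i j, (l : WithTop ℤ) ≤ val (E' i j) := fun i j => by
    simpa using le_val_mul val (le_val_mul val (val_inv_nonneg val hP hPdet) hE)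
      (val_inv_nonneg val hQ hQdet) i j
  have hEE' : E = P * E' * Q := by
    rw [hE', Matrix.mul_assoc P⁻¹, Matrix.mul_nonsing_inv_cancel_left _ _ hPu,
      Matrix.nonsing_inv_mul_cancel_right _ _ hQu]
  have hΔ'val : ∀ i j, ((-c : ℤ) : WithTop ℤ) ≤ val (Δ' i j) :=
    le_val_snfDiag_neg val hπ hac
  have hone : (1 : WithTop ℤ) ≤ ((-c : ℤ) : WithTop ℤ) + (l : WithTop ℤ) := by
    norm_cast
    omega
  rcases le_total n m with h | h
  · have hinv : Δ * Δ' = 1 := by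
      rw [hΔ, hΔ', min_eq_left h]
      exact snfDiag_mul_neg hπ0 h a
    have hF : ∀ i j, 1 ≤ val ((Δ' * E') i j) := fun i j =>
      hone.trans (le_val_mul val hΔ'val hE'val i j)
    refine ⟨P, (1 + Δ' * E') * Q, hP, hPdet,
      val_mul_nonneg val (val_one_add_nonneg val hF) hQ, ?_, ?_⟩
    · rw [Matrix.det_mul, AddValuation.map_mul, val_det_one_add val hF, hQdet, add_zero]
    · have hfac : Δ * (1 + Δ' * E') = Δ + E' := by
        rw [Matrix.mul_add, Matrix.mul_one, ← Matrix.mul_assoc, hinv, Matrix.one_mul]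
      rw [← Matrix.mul_assoc, Matrix.mul_assoc P, hfac, Matrix.mul_add, Matrix.add_mul, ← hM,
        ← hEE']
  · have hinv : Δ' * Δ = 1 := by
      -- `Δ` is itself the diagonal matrix attached to the exponents `-(-a i)`.
      have := snfDiag_mul_neg hπ0 h (fun i => -a i)
      simp only [neg_neg] at this
      rw [hΔ, hΔ', min_eq_right h]
      exact this
    have hF : ∀ i j, 1 ≤ val ((E' * Δ') i j) := fun i j =>
      (hone.trans_eq (add_comm _ _)).trans (le_val_mul val hE'val hΔ'val i j)
    refine ⟨P * (1 + E' * Δ'), Q, val_mul_nonneg val hP (val_one_add_nonneg val hF), ?_,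
      hQ, hQdet, ?_⟩
    · rw [Matrix.det_mul, AddValuation.map_mul, val_det_one_add val hF, hPdet, add_zero]
    · have hfac : (1 + E' * Δ') * Δ = Δ + E' := by
        rw [Matrix.add_mul, Matrix.one_mul, Matrix.mul_assoc, hinv, Matrix.mul_one]
      rw [Matrix.mul_assoc P, hfac, Matrix.mul_add, Matrix.add_mul, ← hM, ← hEE']
end

section
/- Let K be a field with a discrete valuation val, valuation ring O_K, and uniformizer π. Let M ∈ M_{n×m}(O_K) with m ≤ n be a matrix with entries in O_K of full column rank m, and let c = cond(M). Let Y ∈ O_K^n be a vector lying in the K-linear span of the columns of M. Then the unique X ∈ K^m with M·X = Y satisfies val(X_j) ≥ −c for every j. -/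
theorem val_zpow_uniformizer {K : Type} [Field K] (val : AddValuation K (WithTop ℤ))
    (π : K) (hπ : val π = 1) (k : ℤ) : val (π ^ k) = (k : WithTop ℤ) := by
  have hnat : ∀ l : ℕ, val (π ^ l) = ((l : ℤ) : WithTop ℤ) := by
    intro l
    induction l with
    | zero => simp
    | succ l ih =>
      rw [pow_succ, AddValuation.map_mul, ih, hπ]
      norm_cast
  obtain ⟨l, rfl | rfl⟩ := k.eq_nat_or_neg
  · rw [zpow_natCast, hnat]
  · rw [zpow_neg, zpow_natCast, AddValuation.map_inv, hnat]
    rfl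

theorem val_sum_mul_ge {K ι : Type} [Field K] (val : AddValuation K (WithTop ℤ))
    (s : Finset ι) (f g : ι → K) (t : WithTop ℤ)
    (hf : ∀ i, 0 ≤ val (f i)) (hg : ∀ i, t ≤ val (g i)) :
    t ≤ val (∑ i ∈ s, f i * g i) := by
  refine AddValuation.map_le_sum val fun i _ => ?_
  rw [AddValuation.map_mul]
  calc t = 0 + t := (zero_add t).symm
    _ ≤ _ := add_le_add (hf i) (hg i)

/-- The adjugate is computed over the valuation ring, hence stays integral. -/
theorem val_adjugate_nonneg {K : Type} [Field K] (val : AddValuation K (WithTop ℤ))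
    {n : ℕ} (A : Matrix (Fin n) (Fin n) K) (hA : ∀ i j, 0 ≤ val (A i j)) (i j : Fin n) :
    0 ≤ val (A.adjugate i j) := by
  let S : Subring K :=
    { carrier := {x | 0 ≤ val x}
      mul_mem' := fun {a b} ha hb => by
        change 0 ≤ val (a * b)
        rw [AddValuation.map_mul]
        exact add_nonneg ha hb
      one_mem' := by simp
      add_mem' := fun {a b} ha hb => AddValuation.map_le_add val ha hb
      zero_mem' := by simp
      neg_mem' := fun {a} ha => by simpa using ha }
  let B : Matrix (Fin n) (Fin n) S := fun i j => ⟨A i j, hA i j⟩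
  have hB : A = S.subtype.mapMatrix B := rfl
  rw [hB, ← RingHom.map_adjugate]
  exact (B.adjugate i j).2

/-- If `A` is integral with unit determinant, a lower bound for the valuations of the entries of
`A v` is also one for those of `v`, because `det A • v = adj A (A v)`. -/
theorem le_val_of_mulVec {K : Type} [Field K] (val : AddValuation K (WithTop ℤ))
    {n : ℕ} (A : Matrix (Fin n) (Fin n) K) (hA : ∀ i j, 0 ≤ val (A i j))
    (hdet : val A.det = 0) (v : Fin n → K) (t : WithTop ℤ)
    (h : ∀ i, t ≤ val (A.mulVec v i)) (j : Fin n) : t ≤ val (v j) := by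
  have h1 : A.adjugate.mulVec (A.mulVec v) = A.det • v := by
    rw [Matrix.mulVec_mulVec, Matrix.adjugate_mul, Matrix.smul_mulVec, Matrix.one_mulVec]
  have h2 : val (A.det * v j) = val (v j) := by
    rw [AddValuation.map_mul, hdet, zero_add]
  have h3 : A.adjugate.mulVec (A.mulVec v) j = A.det * v j := by
    rw [h1]; rfl
  rw [← h2, ← h3]
  exact val_sum_mul_ge val Finset.univ _ _ t (fun i => val_adjugate_nonneg val A hA j i) h

/-- Let `M ∈ M_{n×m}(O_K)` with `m ≤ n` be of full column rank `m`, with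
invariant factors `a_1 ≤ ⋯ ≤ a_m` and `c = a_m = cond M`.  If `Y ∈ O_K^n` lies
in the `K`-linear span of the columns of `M` (i.e. `Y = M X` for some
`X ∈ K^m`, which is then unique), then `val (X_j) ≥ -c` for every `j`. -/
theorem solution_valuation_ge_neg_cond {K : Type} [Field K]
    (val : AddValuation K (WithTop ℤ)) (hval : Function.Surjective val)
    (π : K) (hπ : val π = 1)
    {n m : ℕ} (hm : 0 < m) (hmn : m ≤ n)
    (M : Matrix (Fin n) (Fin m) K)
    (P : Matrix (Fin n) (Fin n) K) (Q : Matrix (Fin m) (Fin m) K)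
    (hMint : ∀ i j, 0 ≤ val (M i j))
    (hP : ∀ i j, 0 ≤ val (P i j)) (hPdet : val P.det = 0)
    (hQ : ∀ i j, 0 ≤ val (Q i j)) (hQdet : val Q.det = 0)
    (a : ℕ → ℤ) (ha : ∀ i j : ℕ, i ≤ j → j < m → a i ≤ a j)
    (hM : M = P * snfDiag π n m m a * Q)
    (Y : Fin n → K) (hY : ∀ i, 0 ≤ val (Y i))
    (X : Fin m → K) (hX : M.mulVec X = Y) :
    ∀ j, ((-a (m - 1) : ℤ) : WithTop ℤ) ≤ val (X j) := by
  have hfac : P.mulVec ((snfDiag π n m m a).mulVec (Q.mulVec X)) = Y := by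
    rw [Matrix.mulVec_mulVec, Matrix.mulVec_mulVec, ← hM, hX]
  have hD := le_val_of_mulVec val P hP hPdet _ 0 (fun i => by rw [hfac]; exact hY i)
  refine le_val_of_mulVec val Q hQ hQdet X _ fun j => ?_
  have hrow : (snfDiag π n m m a).mulVec (Q.mulVec X) (Fin.castLE hmn j)
      = π ^ a j * Q.mulVec X j := by
    rw [Matrix.mulVec, dotProduct, Finset.sum_eq_single j]
    · simp [snfDiag]
    · intro b _ hb
      have : (j : ℕ) ≠ b := fun h => hb (Fin.ext h.symm)
      simp [snfDiag, this]
    · simp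
  have h0 := hD (Fin.castLE hmn j)
  rw [hrow, AddValuation.map_mul, val_zpow_uniformizer val π hπ] at h0
  have haj := ha j (m - 1) (by omega) (by omega)
  generalize val (Q.mulVec X j) = z at h0 ⊢
  induction z using WithTop.recTopCoe with
  | top => exact le_top
  | coe z =>
    norm_cast at h0 ⊢
    omega
end

section
/- Let K be a field with a discrete valuation val, valuation ring O_K, and uniformizer π. Let M ∈ M_{n×m}(O_K) with m ≤ n be a matrix of full column rank m with c = cond(M), and let l > 2c. Let E ∈ M_{n×m}(K) have all entries of valuation at least l, and let Y, Y' ∈ O_K^n with val(Y_i − Y'_i) ≥ l for all i, such that Y lies in the K-column span of M and Y' lies in the K-column span of M + E. Then the unique solutions X, X' ∈ K^m of M·X = Y and (M+E)·X' = Y' satisfy val(X_j − X'_j) ≥ l − 2c for every j. -/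
namespace PerturbRect

/-- The valuation ring `O_K` as a subring of `K`. -/
def intRing {K : Type} [Field K] (val : AddValuation K (WithTop ℤ)) : Subring K where
  carrier := {x | 0 ≤ val x}
  mul_mem' {a b} ha hb := by
    simp only [Set.mem_ofPred_eq] at *
    rw [val.map_mul]; exact add_nonneg ha hb
  one_mem' := by simp
  add_mem' {a b} ha hb := val.map_le_add ha hb
  zero_mem' := by simp
  neg_mem' {a} ha := by
    simp only [Set.mem_ofPred_eq] at *
    rwa [val.map_neg]

variable {K : Type} [Field K] (val : AddValuation K (WithTop ℤ))

lemma le_val_mul {p q r : ℕ} {s t : WithTop ℤ}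
    {A : Matrix (Fin p) (Fin q) K} {B : Matrix (Fin q) (Fin r) K}
    (hA : ∀ i j, s ≤ val (A i j)) (hB : ∀ i j, t ≤ val (B i j)) (i : Fin p) (j : Fin r) :
    s + t ≤ val ((A * B) i j) := by
  rw [Matrix.mul_apply]
  refine val.map_le_sum fun k _ => ?_
  rw [val.map_mul]
  exact add_le_add (hA i k) (hB k j)

lemma le_val_mulVec {p q : ℕ} {s t : WithTop ℤ}
    {A : Matrix (Fin p) (Fin q) K} {x : Fin q → K}
    (hA : ∀ i j, s ≤ val (A i j)) (hx : ∀ i, t ≤ val (x i)) (i : Fin p) :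
    s + t ≤ val (A.mulVec x i) := by
  simp only [Matrix.mulVec, dotProduct]
  refine val.map_le_sum fun k _ => ?_
  rw [val.map_mul]
  exact add_le_add (hA i k) (hx k)

lemma val_det_nonneg {p : ℕ} {A : Matrix (Fin p) (Fin p) K}
    (hA : ∀ i j, 0 ≤ val (A i j)) : 0 ≤ val A.det := by
  change A.det ∈ intRing val
  rw [Matrix.det_apply]
  refine Subring.sum_mem _ fun σ _ => ?_
  rw [Units.smul_def]
  exact Subring.zsmul_mem _ (Subring.prod_mem _ fun i _ => hA _ _) _

lemma det_ne_zero {p : ℕ} {A : Matrix (Fin p) (Fin p) K} (hdet : val A.det = 0) :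
    A.det ≠ 0 := by
  intro h
  rw [h, val.map_zero] at hdet
  exact WithTop.top_ne_zero hdet

/-- By Cramer's rule, the inverse of an integral matrix with unit determinant is integral. -/
lemma val_inv_nonneg {p : ℕ} {A : Matrix (Fin p) (Fin p) K}
    (hA : ∀ i j, 0 ≤ val (A i j)) (hdet : val A.det = 0) (i j : Fin p) :
    0 ≤ val (A⁻¹ i j) := by
  have h1 : val (A.det⁻¹) = 0 := by
    have h := val.map_mul A.det A.det⁻¹
    rw [mul_inv_cancel₀ (det_ne_zero val hdet), hdet, val.map_one, zero_add] at h
    exact h.symm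
  rw [Matrix.inv_def, Matrix.smul_apply, Ring.inverse_eq_inv', smul_eq_mul, val.map_mul, h1,
    zero_add, Matrix.adjugate_apply]
  refine val_det_nonneg val fun k k' => ?_
  rw [Matrix.updateRow_apply]
  split_ifs
  · by_cases h : k' = i
    · subst h; simp
    · simp [h]
  · exact hA _ _

lemma val_zpow {π : K} (hπ : val π = 1) (k : ℤ) : val (π ^ k) = (k : WithTop ℤ) := by
  have hπ0 : π ≠ 0 := by
    rintro rfl
    rw [val.map_zero] at hπ
    exact absurd hπ (by decide)
  have hpow : ∀ k : ℕ, val (π ^ k) = ((k : ℤ) : WithTop ℤ) := fun k => by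
    rw [val.map_pow, hπ]; simp
  obtain ⟨k, rfl | rfl⟩ := k.eq_nat_or_neg
  · rw [zpow_natCast, hpow]
  · have h := val.map_mul (π ^ (-(k : ℤ))) (π ^ k)
    rw [zpow_neg, zpow_natCast, inv_mul_cancel₀ (pow_ne_zero _ hπ0), val.map_one, hpow] at h
    rw [zpow_neg, zpow_natCast]
    generalize val ((π ^ k)⁻¹) = w at h
    cases w with
    | top => simp at h
    | coe w =>
      norm_cast at h ⊢
      omega

/-- A matrix with Smith normal form `P Δ Q` of full column rank and largest invariant factor of
valuation at most `c` has a left inverse with entries of valuation at least `-c`. -/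
lemma exists_left_inverse {π : K} (hπ : val π = 1) {n m : ℕ} (hmn : m ≤ n)
    {P : Matrix (Fin n) (Fin n) K} {Q : Matrix (Fin m) (Fin m) K}
    (hP : ∀ i j, 0 ≤ val (P i j)) (hPdet : val P.det = 0)
    (hQ : ∀ i j, 0 ≤ val (Q i j)) (hQdet : val Q.det = 0)
    {a : ℕ → ℤ} {c : ℤ} (hc : ∀ i, i < m → a i ≤ c) :
    ∃ L : Matrix (Fin m) (Fin n) K, L * (P * snfDiag π n m m a * Q) = 1 ∧
      ∀ i j, ((-c : ℤ) : WithTop ℤ) ≤ val (L i j) := by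
  have hπ0 : π ≠ 0 := by
    rintro rfl
    rw [val.map_zero] at hπ
    exact absurd hπ (by decide)
  set D : Matrix (Fin m) (Fin n) K :=
    fun i j => if (i : ℕ) = (j : ℕ) then π ^ (-a (i : ℕ)) else 0 with hD
  have hDD : D * snfDiag π n m m a = 1 := by
    ext i j
    rw [Matrix.mul_apply, Finset.sum_eq_single (Fin.castLE hmn i)]
    · by_cases hij : i = j
      · subst hij
        simpa [hD, snfDiag] using inv_mul_cancel₀ (zpow_ne_zero (a i) hπ0)
      · have : (i : ℕ) ≠ j := fun h => hij (Fin.ext h)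
        simp [snfDiag, this, hij]
    · intro k _ hk
      have : (i : ℕ) ≠ k := fun h => hk (Fin.ext h.symm)
      simp [hD, this]
    · simp
  have hDval : ∀ i j, ((-c : ℤ) : WithTop ℤ) ≤ val (D i j) := by
    intro i j
    simp only [hD]
    split_ifs
    · rw [val_zpow val hπ]
      have := hc i i.2
      exact_mod_cast (by omega)
    · simp
  refine ⟨Q⁻¹ * D * P⁻¹, ?_, fun i j => ?_⟩
  · have hP1 : P⁻¹ * P = 1 := Matrix.nonsing_inv_mul _ (det_ne_zero val hPdet).isUnit
    have hQ1 : Q⁻¹ * Q = 1 := Matrix.nonsing_inv_mul _ (det_ne_zero val hQdet).isUnit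
    calc Q⁻¹ * D * P⁻¹ * (P * snfDiag π n m m a * Q)
        = Q⁻¹ * (D * ((P⁻¹ * P) * snfDiag π n m m a)) * Q := by simp only [Matrix.mul_assoc]
      _ = 1 := by rw [hP1, Matrix.one_mul, hDD, Matrix.mul_one, hQ1]
  · have := le_val_mul val (le_val_mul val (val_inv_nonneg val hQ hQdet) hDval)
      (val_inv_nonneg val hP hPdet) i j
    simpa using this

/-- The invariant factors of an integral matrix have nonnegative valuation. -/
lemma invariant_nonneg {π : K} (hπ : val π = 1) {n m : ℕ} (hmn : m ≤ n)
    {P : Matrix (Fin n) (Fin n) K} {Q : Matrix (Fin m) (Fin m) K}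
    (hP : ∀ i j, 0 ≤ val (P i j)) (hPdet : val P.det = 0)
    (hQ : ∀ i j, 0 ≤ val (Q i j)) (hQdet : val Q.det = 0) {a : ℕ → ℤ}
    (hM : ∀ i j, 0 ≤ val ((P * snfDiag π n m m a * Q) i j)) {k : ℕ} (hk : k < m) : 0 ≤ a k := by
  have hP1 : P⁻¹ * P = 1 := Matrix.nonsing_inv_mul _ (det_ne_zero val hPdet).isUnit
  have hQ1 : Q * Q⁻¹ = 1 := Matrix.mul_nonsing_inv _ (det_ne_zero val hQdet).isUnit
  have hΔ : P⁻¹ * (P * snfDiag π n m m a * Q) * Q⁻¹ = snfDiag π n m m a :=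
    calc P⁻¹ * (P * snfDiag π n m m a * Q) * Q⁻¹
        = (P⁻¹ * P) * snfDiag π n m m a * (Q * Q⁻¹) := by simp only [Matrix.mul_assoc]
      _ = snfDiag π n m m a := by rw [hP1, hQ1, Matrix.one_mul, Matrix.mul_one]
  have h := le_val_mul val (le_val_mul val (val_inv_nonneg val hP hPdet) hM)
    (val_inv_nonneg val hQ hQdet) ⟨k, hk.trans_le hmn⟩ ⟨k, hk⟩
  rw [hΔ] at h
  simp only [snfDiag, hk, and_self, if_true, val_zpow val hπ, add_zero] at h
  exact_mod_cast h

/-- If `x = b - T x` where `T` has entries of positive valuation, then `x` has entries at least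
as divisible as those of `b`: every entry of `T x` has valuation strictly above the minimum over the entries of `x`,
so that minimum comes from `b`. -/
lemma le_val_of_contracting {m : ℕ} {x b : Fin m → K} {T : Matrix (Fin m) (Fin m) K} {s d : ℤ}
    (hs : 0 < s) (hT : ∀ i j, (s : WithTop ℤ) ≤ val (T i j)) (hb : ∀ i, (d : WithTop ℤ) ≤ val (b i))
    (hx : x = b - T.mulVec x) (j : Fin m) : (d : WithTop ℤ) ≤ val (x j) := by
  have : Nonempty (Fin m) := ⟨j⟩
  obtain ⟨i, hi⟩ := Finite.exists_min fun j => val (x j)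
  refine le_trans ?_ (hi j)
  by_contra! hlt
  have hTx := le_val_mulVec val hT hi i
  have hxi : val (x i) = val (b i - T.mulVec x i) := by
    conv_lhs => rw [hx]
    rfl
  have hmin := val.map_sub (b i) (T.mulVec x i)
  rw [← hxi] at hmin
  generalize val (x i) = w at *
  cases w with
  | top => simp at hlt
  | coe w =>
    rcases min_le_iff.mp hmin with h | h
    · exact absurd ((hb i).trans h) hlt.not_ge
    · have := hTx.trans h
      norm_cast at this
      omega

end PerturbRect

open PerturbRect

/-- Let `M ∈ M_{n×m}(O_K)` with `m ≤ n` be of full column rank `m`, with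
invariant factors `a_1 ≤ ⋯ ≤ a_m` and `c = a_m = cond M`, and let `l > 2c`.
Let `E ∈ M_{n×m}(K)` have all entries of valuation at least `l`, and let
`Y, Y' ∈ O_K^n` with `val (Y_i - Y'_i) ≥ l` for all `i`, such that `Y` lies in
the `K`-column span of `M` and `Y'` in that of `M + E`.  Then the (unique)
solutions `X` of `M X = Y` and `X'` of `(M + E) X' = Y'` satisfy
`val (X_j - X'_j) ≥ l - 2c` for every `j`. -/
theorem linear_system_perturbation_rect {K : Type} [Field K]
    (val : AddValuation K (WithTop ℤ)) (hval : Function.Surjective val)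
    (π : K) (hπ : val π = 1)
    {n m : ℕ} (hm : 0 < m) (hmn : m ≤ n)
    (M : Matrix (Fin n) (Fin m) K)
    (P : Matrix (Fin n) (Fin n) K) (Q : Matrix (Fin m) (Fin m) K)
    (hMint : ∀ i j, 0 ≤ val (M i j))
    (hP : ∀ i j, 0 ≤ val (P i j)) (hPdet : val P.det = 0)
    (hQ : ∀ i j, 0 ≤ val (Q i j)) (hQdet : val Q.det = 0)
    (a : ℕ → ℤ) (ha : ∀ i j : ℕ, i ≤ j → j < m → a i ≤ a j)
    (hM : M = P * snfDiag π n m m a * Q)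
    (l : ℤ) (hl : 2 * a (m - 1) < l)
    (E : Matrix (Fin n) (Fin m) K)
    (hE : ∀ i j, ((l : ℤ) : WithTop ℤ) ≤ val (E i j))
    (Y Y' : Fin n → K)
    (hY : ∀ i, 0 ≤ val (Y i)) (hY' : ∀ i, 0 ≤ val (Y' i))
    (hYY' : ∀ i, ((l : ℤ) : WithTop ℤ) ≤ val (Y i - Y' i))
    (X X' : Fin m → K)
    (hX : M.mulVec X = Y) (hX' : (M + E).mulVec X' = Y') :
    ∀ j, ((l - 2 * a (m - 1) : ℤ) : WithTop ℤ) ≤ val (X j - X' j) := by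
  have hcmax : ∀ i, i < m → a i ≤ a (m - 1) := fun i hi => ha i (m - 1) (by omega) (by omega)
  obtain ⟨L, hLM, hL⟩ := exists_left_inverse val hπ hmn hP hPdet hQ hQdet hcmax
  have hc : 0 ≤ a (m - 1) :=
    invariant_nonneg val hπ hmn hP hPdet hQ hQdet (hM ▸ hMint) (by omega)
  rw [← hM] at hLM
  generalize a (m - 1) = c at *
  have hLE := le_val_mul val hL hE
  have hLX : X = L.mulVec Y := by
    rw [← hX, Matrix.mulVec_mulVec, hLM, Matrix.one_mulVec]
  have hLX' : X' = L.mulVec Y' - (L * E).mulVec X' := by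
    rw [← hX', Matrix.mulVec_mulVec, Matrix.mul_add, hLM, Matrix.add_mulVec, Matrix.one_mulVec,
      add_sub_cancel_right]
  have hX'val : ∀ j, ((-c : ℤ) : WithTop ℤ) ≤ val (X' j) := by
    refine le_val_of_contracting val (s := -c + l) (by omega) (fun i j => ?_) (fun i => ?_) hLX'
    · exact_mod_cast hLE i j
    · simpa using le_val_mulVec val hL hY' i
  intro j
  have hdiff : X j - X' j = L.mulVec (Y - Y') j + (L * E).mulVec X' j := by
    have h1 := congrFun hLX j
    have h2 := congrFun hLX' j
    rw [Pi.sub_apply] at h2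
    rw [Matrix.mulVec_sub, Pi.sub_apply, ← h1]
    linear_combination -h2
  rw [hdiff]
  refine val.map_le_add ?_ ?_
  · refine le_trans ?_ (le_val_mulVec val hL (fun i => hYY' i) j)
    exact_mod_cast (by omega)
  · refine le_trans ?_ (le_val_mulVec val hLE hX'val j)
    exact_mod_cast (by omega)
end

section
/- Let K be a field with a discrete valuation val, valuation ring O_K, and uniformizer π. Let A ∈ M_{r×c}(K) be a matrix in row echelon form whose pivot entries (the first nonzero entry of each nonzero row) are all equal to 1, and all of whose entries have valuation at least β, where β ≤ 0. Then there exists an invertible matrix U ∈ GL_r(K) such that U·A is in reduced row echelon form (each pivot is 1 and is the only nonzero entry in its column) and every entry of U·A has valuation at least r·β. -/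
/-!
Let `N` be the square matrix whose `k`-th column is the pivot column of row `k` of `A` when that row
is nonzero, and the `k`-th standard basis vector otherwise.  The echelon condition and the
normalisation of the pivots make `N` upper unitriangular, so `U = N⁻¹` is upper triangular of
determinant one.  Put `B = N⁻¹ * A`.

* If row `k` of `A` has pivot column `j`, then column `j` of `A` is column `k` of `N`, so column `j`
  of `B` is the `k`-th standard basis vector (`inv_mul_pivot_col`).
* Since `N⁻¹` is upper triangular, a column of `A` vanishing from row `i` downwards does so in `B` too
  (`inv_mul_eq_zero`).  Hence `A` and `B` have the same pivot positions and zero rows, and `B` is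
  reduced.
* Comparing rows in `N * B = A` gives the back substitution
  `B i = A i - ∑ k > i, N i k • B k`, and all entries of `N` have valuation at least `β`.  Going up
  from the last row, row `i` (counted from `0`) of `B` has valuation at least `(r - i) * β`
  (`le_val_of_mul_eq`), which is at least `r * β` because `β ≤ 0`.
-/

/-- `j` is the pivot column of row `i` of `A`: the entry `A i j` is the first
nonzero entry of row `i`. -/
def IsPivot {K : Type} [Field K] {r c : ℕ} (A : Matrix (Fin r) (Fin c) K)
    (i : Fin r) (j : Fin c) : Prop :=
  A i j ≠ 0 ∧ ∀ j' : Fin c, j' < j → A i j' = 0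

/-- `A` is in row echelon form: every nonzero row lies above every zero row,
and the pivot of each nonzero row is strictly to the right of the pivot of any
row above it. -/
def IsRowEchelon {K : Type} [Field K] {r c : ℕ}
    (A : Matrix (Fin r) (Fin c) K) : Prop :=
  (∀ i i' : Fin r, i ≤ i' → (∀ j, A i j = 0) → ∀ j, A i' j = 0) ∧
  (∀ (i i' : Fin r) (j j' : Fin c),
    i < i' → IsPivot A i j → IsPivot A i' j' → j < j')

/-- `A` is in reduced row echelon form: it is in row echelon form, each pivot
equals `1`, and each pivot is the only nonzero entry of its column. -/
def IsReducedRowEchelon {K : Type} [Field K] {r c : ℕ}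
    (A : Matrix (Fin r) (Fin c) K) : Prop :=
  IsRowEchelon A ∧
  ∀ (i : Fin r) (j : Fin c), IsPivot A i j →
    A i j = 1 ∧ ∀ i' : Fin r, i' ≠ i → A i' j = 0

section RowReduction

variable {K : Type} [Field K] {r c : ℕ}

theorem IsPivot.unique {A : Matrix (Fin r) (Fin c) K} {i : Fin r} {j j' : Fin c}
    (h : IsPivot A i j) (h' : IsPivot A i j') : j = j' := by
  rcases lt_trichotomy j j' with hlt | heq | hlt
  · exact absurd (h'.2 j hlt) h.1
  · exact heq
  · exact absurd (h.2 j' hlt) h'.1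

theorem exists_isPivot {A : Matrix (Fin r) (Fin c) K} {i : Fin r} {j : Fin c}
    (h : A i j ≠ 0) : ∃ j, IsPivot A i j := by
  obtain ⟨m, hm, hmin⟩ := WellFounded.has_min (wellFounded_lt (α := Fin c)) {j | A i j ≠ 0} ⟨j, h⟩
  refine ⟨m, hm, fun j' hj' => ?_⟩
  by_contra hne
  exact hmin j' hne hj'

/-- In row echelon form, the entries weakly left of a pivot vanish in every lower row. -/
theorem IsRowEchelon.eq_zero_below {A : Matrix (Fin r) (Fin c) K} (hA : IsRowEchelon A)
    {i i' : Fin r} {j j' : Fin c} (hp : IsPivot A i j) (hi : i < i') (hj : j' ≤ j) :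
    A i' j' = 0 := by
  by_contra hne
  obtain ⟨m, hm⟩ := exists_isPivot hne
  have hlt := hA.2 i i' j m hi hp hm
  exact hne (hm.2 j' (hj.trans_lt hlt))

open Classical in
/-- The matrix whose `k`-th column is the pivot column of row `k` of `A` if that row is nonzero, and
the `k`-th standard basis vector otherwise. -/
noncomputable def pivotMatrix (A : Matrix (Fin r) (Fin c) K) : Matrix (Fin r) (Fin r) K :=
  fun i k => if h : ∃ j, IsPivot A k j then A i h.choose else (1 : Matrix (Fin r) (Fin r) K) i k

theorem pivotMatrix_of_isPivot {A : Matrix (Fin r) (Fin c) K} {k : Fin r} {j : Fin c}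
    (h : IsPivot A k j) (i : Fin r) : pivotMatrix A i k = A i j := by
  have hex : ∃ j, IsPivot A k j := ⟨j, h⟩
  simp only [pivotMatrix, dif_pos hex]
  rw [hex.choose_spec.unique h]

theorem pivotMatrix_of_not {A : Matrix (Fin r) (Fin c) K} {k : Fin r}
    (h : ¬ ∃ j, IsPivot A k j) (i : Fin r) :
    pivotMatrix A i k = (1 : Matrix (Fin r) (Fin r) K) i k := by
  simp only [pivotMatrix, dif_neg h]

theorem pivotMatrix_blockTriangular {A : Matrix (Fin r) (Fin c) K} (hA : IsRowEchelon A) :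
    (pivotMatrix A).BlockTriangular id := by
  intro i k hik
  change k < i at hik
  by_cases h : ∃ j, IsPivot A k j
  · obtain ⟨j, hj⟩ := h
    rw [pivotMatrix_of_isPivot hj]
    exact hA.eq_zero_below hj hik le_rfl
  · rw [pivotMatrix_of_not h, Matrix.one_apply_ne hik.ne']

theorem pivotMatrix_diag {A : Matrix (Fin r) (Fin c) K}
    (hpiv : ∀ (i : Fin r) (j : Fin c), IsPivot A i j → A i j = 1) (i : Fin r) :
    pivotMatrix A i i = 1 := by
  by_cases h : ∃ j, IsPivot A i j
  · obtain ⟨j, hj⟩ := h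
    rw [pivotMatrix_of_isPivot hj, hpiv i j hj]
  · rw [pivotMatrix_of_not h, Matrix.one_apply_eq]

theorem det_pivotMatrix {A : Matrix (Fin r) (Fin c) K} (hA : IsRowEchelon A)
    (hpiv : ∀ (i : Fin r) (j : Fin c), IsPivot A i j → A i j = 1) :
    (pivotMatrix A).det = 1 := by
  rw [Matrix.det_of_isUpperTriangular (pivotMatrix_blockTriangular hA)]
  exact Finset.prod_eq_one fun i _ => pivotMatrix_diag hpiv i

/-- Column `j` of `A` is column `k` of `N`, which `N⁻¹` sends to a standard basis vector. -/
theorem inv_mul_pivot_col {A : Matrix (Fin r) (Fin c) K} (hN : IsUnit (pivotMatrix A).det)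
    {k : Fin r} {j : Fin c} (h : IsPivot A k j) (i : Fin r) :
    ((pivotMatrix A)⁻¹ * A) i j = (1 : Matrix (Fin r) (Fin r) K) i k := by
  rw [← Matrix.nonsing_inv_mul _ hN, Matrix.mul_apply, Matrix.mul_apply]
  exact Finset.sum_congr rfl fun l _ => by rw [pivotMatrix_of_isPivot h]

theorem inv_mul_eq_zero {A : Matrix (Fin r) (Fin c) K} (hA : IsRowEchelon A)
    (hN : IsUnit (pivotMatrix A).det) {i : Fin r} {j : Fin c}
    (h : ∀ k, i ≤ k → A k j = 0) : ((pivotMatrix A)⁻¹ * A) i j = 0 := by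
  have := Matrix.invertibleOfIsUnitDet _ hN
  have htri := Matrix.blockTriangular_inv_of_blockTriangular (pivotMatrix_blockTriangular hA)
  rw [Matrix.mul_apply]
  refine Finset.sum_eq_zero fun k _ => ?_
  rcases lt_or_ge k i with hk | hk
  · rw [htri hk, zero_mul]
  · rw [h k hk, mul_zero]

theorem inv_mul_row_eq_zero {A : Matrix (Fin r) (Fin c) K} (hA : IsRowEchelon A)
    (hN : IsUnit (pivotMatrix A).det) {i : Fin r} (h : ∀ j, A i j = 0) (j : Fin c) :
    ((pivotMatrix A)⁻¹ * A) i j = 0 :=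
  inv_mul_eq_zero hA hN fun k hk => hA.1 i k hk h j

theorem isPivot_inv_mul {A : Matrix (Fin r) (Fin c) K} (hA : IsRowEchelon A)
    (hN : IsUnit (pivotMatrix A).det) {i : Fin r} {j : Fin c} (h : IsPivot A i j) :
    IsPivot ((pivotMatrix A)⁻¹ * A) i j := by
  refine ⟨?_, fun j' hj' => inv_mul_eq_zero hA hN fun k hk => ?_⟩
  · rw [inv_mul_pivot_col hN h, Matrix.one_apply_eq]
    exact one_ne_zero
  · rcases hk.eq_or_lt with rfl | hlt
    · exact h.2 j' hj'
    · exact hA.eq_zero_below h hlt hj'.le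

theorem isPivot_of_inv_mul {A : Matrix (Fin r) (Fin c) K} (hA : IsRowEchelon A)
    (hN : IsUnit (pivotMatrix A).det) {i : Fin r} {j : Fin c}
    (h : IsPivot ((pivotMatrix A)⁻¹ * A) i j) : IsPivot A i j := by
  have hne : ∃ l, A i l ≠ 0 := by
    by_contra! hzero
    exact h.1 (inv_mul_row_eq_zero hA hN hzero j)
  obtain ⟨l, hl⟩ := hne
  obtain ⟨m, hm⟩ := exists_isPivot hl
  rwa [h.unique (isPivot_inv_mul hA hN hm)]

theorem isReducedRowEchelon_inv_mul {A : Matrix (Fin r) (Fin c) K} (hA : IsRowEchelon A)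
    (hN : IsUnit (pivotMatrix A).det) : IsReducedRowEchelon ((pivotMatrix A)⁻¹ * A) := by
  refine ⟨⟨fun i i' hi hzero => ?_, fun i i' j j' hi hj hj' => ?_⟩, fun i j h => ?_⟩
  · refine inv_mul_row_eq_zero hA hN (hA.1 i i' hi fun l => ?_)
    by_contra hne
    obtain ⟨m, hm⟩ := exists_isPivot hne
    exact (isPivot_inv_mul hA hN hm).1 (hzero m)
  · exact hA.2 i i' j j' hi (isPivot_of_inv_mul hA hN hj) (isPivot_of_inv_mul hA hN hj')
  · have hp := isPivot_of_inv_mul hA hN h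
    refine ⟨?_, fun i' hi' => ?_⟩
    · rw [inv_mul_pivot_col hN hp, Matrix.one_apply_eq]
    · rw [inv_mul_pivot_col hN hp, Matrix.one_apply_ne hi']

theorem le_val_pivotMatrix (val : AddValuation K (WithTop ℤ)) {A : Matrix (Fin r) (Fin c) K}
    {β : ℤ} (hβ : β ≤ 0) (hA : ∀ i j, (β : WithTop ℤ) ≤ val (A i j)) (i k : Fin r) :
    (β : WithTop ℤ) ≤ val (pivotMatrix A i k) := by
  by_cases h : ∃ j, IsPivot A k j
  · obtain ⟨j, hj⟩ := h
    rw [pivotMatrix_of_isPivot hj]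
    exact hA i j
  · rw [pivotMatrix_of_not h, Matrix.one_apply]
    split_ifs
    · rw [val.map_one]
      exact_mod_cast hβ
    · rw [val.map_zero]
      exact le_top

/-- Back substitution: if `N` is upper unitriangular, and `N` and `N * B` have entries of valuation at
least `β ≤ 0`, then the valuation of `B` drops by at most `-β` per row, starting from the last. -/
theorem le_val_of_mul_eq (val : AddValuation K (WithTop ℤ)) {A B : Matrix (Fin r) (Fin c) K}
    {N : Matrix (Fin r) (Fin r) K} {β : ℤ} (hβ : β ≤ 0)
    (hA : ∀ i j, (β : WithTop ℤ) ≤ val (A i j)) (hN : ∀ i k, (β : WithTop ℤ) ≤ val (N i k))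
    (htri : N.BlockTriangular id) (hdiag : ∀ i, N i i = 1) (hmul : N * B = A)
    (i : Fin r) (j : Fin c) :
    ((((r : ℤ) - (i : ℕ)) * β : ℤ) : WithTop ℤ) ≤ val (B i j) := by
  induction i using WellFoundedGT.induction with
  | ind i ih =>
  have hrow : B i j = A i j - ∑ k ∈ Finset.univ.erase i, N i k * B k j := by
    rw [← hmul, Matrix.mul_apply, ← Finset.add_sum_erase _ _ (Finset.mem_univ i), hdiag, one_mul,
      add_sub_cancel_right]
  have hi : ((i : ℕ) : ℤ) + 1 ≤ r := by exact_mod_cast i.isLt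
  rw [hrow]
  refine val.map_le_sub (le_trans ?_ (hA i j)) (val.map_le_sum fun k hk => ?_)
  · exact_mod_cast (by nlinarith : ((r : ℤ) - (i : ℕ)) * β ≤ β)
  · rcases lt_or_ge k i with hki | hki
    · rw [htri hki, zero_mul, val.map_zero]
      exact le_top
    · have hlt : i < k := lt_of_le_of_ne hki (Finset.ne_of_mem_erase hk).symm
      have hlt' : ((i : ℕ) : ℤ) + 1 ≤ (k : ℕ) := by exact_mod_cast hlt
      rw [val.map_mul]
      refine le_trans ?_ (add_le_add (hN i k) (ih k hlt))
      exact_mod_cast (by nlinarith :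
        ((r : ℤ) - (i : ℕ)) * β ≤ β + ((r : ℤ) - (k : ℕ)) * β)

end RowReduction

/-- Let `A ∈ M_{r×c}(K)` be in row echelon form with all pivots equal to `1`
and all entries of valuation at least `β ≤ 0`.  Then there is an invertible
`U ∈ GL_r(K)` such that `U·A` is in reduced row echelon form and every entry of
`U·A` has valuation at least `r·β`. -/
theorem row_echelon_to_reduced_valuation {K : Type} [Field K]
    (val : AddValuation K (WithTop ℤ)) (hval : Function.Surjective val)
    (π : K) (hπ : val π = 1)
    {r c : ℕ} (A : Matrix (Fin r) (Fin c) K)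
    (β : ℤ) (hβ : β ≤ 0)
    (hA : ∀ i j, ((β : ℤ) : WithTop ℤ) ≤ val (A i j))
    (href : IsRowEchelon A)
    (hpiv : ∀ (i : Fin r) (j : Fin c), IsPivot A i j → A i j = 1) :
    ∃ U : Matrix (Fin r) (Fin r) K, IsUnit U.det ∧
      IsReducedRowEchelon (U * A) ∧
      ∀ i j, (((r : ℤ) * β : ℤ) : WithTop ℤ) ≤ val ((U * A) i j) := by
  have hN : IsUnit (pivotMatrix A).det := by
    rw [det_pivotMatrix href hpiv]
    exact isUnit_one
  refine ⟨(pivotMatrix A)⁻¹, Matrix.isUnit_nonsing_inv_det _ hN,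
    isReducedRowEchelon_inv_mul href hN, fun i j => ?_⟩
  refine le_trans ?_ (le_val_of_mul_eq val hβ hA (le_val_pivotMatrix val hβ hA)
    (pivotMatrix_blockTriangular href) (pivotMatrix_diag hpiv)
    (Matrix.mul_nonsing_inv_cancel_left _ A hN) i j)
  have hi : (0 : ℤ) ≤ (i : ℕ) := Int.natCast_nonneg _
  exact_mod_cast (by nlinarith : (r : ℤ) * β ≤ ((r : ℤ) - (i : ℕ)) * β)
end
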